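/- arXiv:2210.02824 — 3 statements merged into one kernel-verified Lean document; each statement's English description precedes it below -/
import Mathlib

section
/- Let f : ℝ^d → ℝ be twice continuously differentiable and strictly positive, let α ∈ (0,1) and ν ∈ ℝ^d, and define g : ℝ^d → ℝ by g(λ) = α·f(ν + (1−α)λ) + (1−α)·f(ν − αλ). Then the map λ ↦ log g(λ) is twice differentiable at λ = 0, its first Fréchet derivative at 0 is the zero linear map, and its second iterated Fréchet derivative at 0 equals (α(1−α)/f(ν)) times the second iterated Fréchet derivative of f at ν. (Equations (eq:g_nabla) and (eq:s2) of the paper: the λ-score of the reparameterized mixture log-density vanishes identically and the information on λ is carried by the second derivative ∇_{λλ} l(w; ψ*, α) = α(1−α) ∇_{θθ} f / f.) -/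
/-!
The weights of the mixture `g` are balanced by the reparameterization: differentiating `n` times
at `0` gives `Dⁿg(0) = (α(1-α)ⁿ + (1-α)(-α)ⁿ) • Dⁿf(ν)`, whose coefficient is `0` for `n = 1` and
`α(1-α)` for `n = 2`. Since `0` is thus a critical point of `g`, the quadratic term in `Dg` drops
out of the second derivative of `log ∘ g`, leaving `D²g(0) / g(0)` with `g(0) = f(ν)`.
-/

section NormedSpace

variable {𝕜 E F G : Type*} [NontriviallyNormedField 𝕜] [NormedAddCommGroup E] [NormedSpace 𝕜 E]
  [NormedAddCommGroup F] [NormedSpace 𝕜 F] [NormedAddCommGroup G] [NormedSpace 𝕜 G]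

theorem iteratedFDeriv_comp_smul (f : E → F) (c : 𝕜) (n : ℕ) (x : E) :
    iteratedFDeriv 𝕜 n (fun y ↦ f (c • y)) x = c ^ n • iteratedFDeriv 𝕜 n f (c • x) := by
  induction n generalizing x with
  | zero => ext m; simp
  | succ n ih =>
    ext m
    rw [iteratedFDeriv_succ_apply_left, funext ih, ← Pi.smul_def,
      fderiv_const_smul_field (F := E [×n]→L[𝕜] F) (c ^ n)]
    simp [iteratedFDeriv_succ_apply_left, fderiv_comp_smul, pow_succ, mul_smul]

theorem iteratedFDeriv_comp_add_smul (f : E → F) (a : E) (c : 𝕜) (n : ℕ) (x : E) :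
    iteratedFDeriv 𝕜 n (fun y ↦ f (a + c • y)) x = c ^ n • iteratedFDeriv 𝕜 n f (a + c • x) := by
  rw [iteratedFDeriv_comp_smul (fun z ↦ f (a + z)), iteratedFDeriv_comp_add_left]

theorem contDiffAt_comp_add_smul_zero {f : E → F} {a : E} {n : WithTop ℕ∞}
    (hf : ContDiffAt 𝕜 n f a) (c : 𝕜) : ContDiffAt 𝕜 n (fun y ↦ f (a + c • y)) 0 :=
  ContDiffAt.comp 0 (by simpa using hf) (by fun_prop)

theorem iteratedFDeriv_two_comp_of_fderiv_eq_zero {h : F → G} {g : E → F} {x : E}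
    (hh : ContDiffAt 𝕜 2 h (g x)) (hg : ContDiffAt 𝕜 2 g x) (hgx : fderiv 𝕜 g x = 0) :
    iteratedFDeriv 𝕜 2 (h ∘ g) x =
      (fderiv 𝕜 h (g x)).compContinuousMultilinearMap (iteratedFDeriv 𝕜 2 g x) := by
  have chain_rule : fderiv 𝕜 (h ∘ g) =ᶠ[nhds x]
      fun y ↦ (fderiv 𝕜 h (g y)).comp (fderiv 𝕜 g y) := by
    filter_upwards [hg.eventually (by simp),
      hg.continuousAt.eventually (hh.eventually (by simp))] with y hgy hhy
    exact fderiv_comp y (hhy.differentiableAt two_ne_zero) (hgy.differentiableAt two_ne_zero)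
  have hDg : DifferentiableAt 𝕜 (fderiv 𝕜 g) x :=
    (hg.fderiv_right_succ (n := 1)).differentiableAt one_ne_zero
  have hDh : DifferentiableAt 𝕜 (fun y ↦ fderiv 𝕜 h (g y)) x :=
    ((hh.fderiv_right_succ (n := 1)).differentiableAt one_ne_zero).comp x
      (hg.differentiableAt two_ne_zero)
  have second_deriv : fderiv 𝕜 (fderiv 𝕜 (h ∘ g)) x =
      (ContinuousLinearMap.compL 𝕜 E F G (fderiv 𝕜 h (g x))).comp (fderiv 𝕜 (fderiv 𝕜 g) x) := by
    rw [chain_rule.fderiv_eq, fderiv_clm_comp hDh hDg, hgx, map_zero,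
      ContinuousLinearMap.zero_comp, add_zero]
  ext m
  simp [iteratedFDeriv_two_apply, second_deriv]

end NormedSpace

section ReparamMixture

variable {E : Type*} [NormedAddCommGroup E] [NormedSpace ℝ E]

theorem iteratedFDeriv_two_log_of_fderiv_eq_zero {g : E → ℝ} {x : E} (hg : ContDiffAt ℝ 2 g x)
    (hx : g x ≠ 0) (hgx : fderiv ℝ g x = 0) :
    iteratedFDeriv ℝ 2 (fun y ↦ Real.log (g y)) x = (g x)⁻¹ • iteratedFDeriv ℝ 2 g x := by
  have comp_eq := iteratedFDeriv_two_comp_of_fderiv_eq_zero (Real.contDiffAt_log.2 hx) hg hgx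
  rw [(Real.hasDerivAt_log hx).hasFDerivAt.fderiv] at comp_eq
  ext m
  simpa [Function.comp_def, mul_comm] using congr($comp_eq m)

/-- The two-component mixture `α f(θ₁) + (1 - α) f(θ₂)` as a function of the difference
`lam = θ₁ - θ₂`, at a fixed weighted mean `ν = α θ₁ + (1 - α) θ₂`. -/
def reparamMixture (f : E → ℝ) (α : ℝ) (ν lam : E) : ℝ :=
  α * f (ν + (1 - α) • lam) + (1 - α) * f (ν - α • lam)

variable {f : E → ℝ} {α : ℝ} {ν : E}

theorem reparamMixture_zero : reparamMixture f α ν 0 = f ν := by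
  simp only [reparamMixture, smul_zero, add_zero, sub_zero]
  ring

theorem reparamMixture_eq_add_smul :
    reparamMixture f α ν =
      fun lam ↦ α • f (ν + (1 - α) • lam) + (1 - α) • f (ν + (-α) • lam) := by
  simp [funext_iff, reparamMixture, sub_eq_add_neg]

theorem contDiffAt_reparamMixture_zero {n : WithTop ℕ∞} (hf : ContDiffAt ℝ n f ν) :
    ContDiffAt ℝ n (reparamMixture f α ν) 0 := by
  rw [reparamMixture_eq_add_smul]
  exact ((contDiffAt_comp_add_smul_zero hf _).const_smul α).add
    ((contDiffAt_comp_add_smul_zero hf _).const_smul (1 - α))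

theorem iteratedFDeriv_reparamMixture_zero {n : ℕ} (hf : ContDiffAt ℝ n f ν) :
    iteratedFDeriv ℝ n (reparamMixture f α ν) 0 =
      (α * (1 - α) ^ n + (1 - α) * (-α) ^ n) • iteratedFDeriv ℝ n f ν := by
  have smooth := contDiffAt_comp_add_smul_zero hf
  rw [reparamMixture_eq_add_smul,
    fun_iteratedFDeriv_add_apply ((smooth _).const_smul α) ((smooth _).const_smul (1 - α)),
    iteratedFDeriv_const_smul_apply' (smooth _), iteratedFDeriv_const_smul_apply' (smooth _),
    iteratedFDeriv_comp_add_smul, iteratedFDeriv_comp_add_smul]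
  simp only [smul_zero, add_zero, smul_smul, add_smul]

theorem fderiv_reparamMixture_zero (hf : ContDiffAt ℝ 1 f ν) :
    fderiv ℝ (reparamMixture f α ν) 0 = 0 := by
  have coeff_eq_zero : α * (1 - α) ^ 1 + (1 - α) * (-α) ^ 1 = 0 := by ring
  have first_order : iteratedFDeriv ℝ 1 (reparamMixture f α ν) 0 = 0 := by
    rw [iteratedFDeriv_reparamMixture_zero hf, coeff_eq_zero, zero_smul]
  ext v
  simpa using congr($first_order fun _ ↦ v)

theorem iteratedFDeriv_two_reparamMixture_zero (hf : ContDiffAt ℝ 2 f ν) :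
    iteratedFDeriv ℝ 2 (reparamMixture f α ν) 0 = (α * (1 - α)) • iteratedFDeriv ℝ 2 f ν := by
  rw [iteratedFDeriv_reparamMixture_zero hf]
  congr 1
  ring

theorem stmt_2_general (hf : ContDiffAt ℝ 2 f ν) (hfν : 0 < f ν) :
    ContDiffAt ℝ 2 (fun lam ↦ Real.log (reparamMixture f α ν lam)) 0 ∧
    fderiv ℝ (fun lam ↦ Real.log (reparamMixture f α ν lam)) 0 = 0 ∧
    iteratedFDeriv ℝ 2 (fun lam ↦ Real.log (reparamMixture f α ν lam)) 0 =
      (α * (1 - α) / f ν) • iteratedFDeriv ℝ 2 f ν := by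
  have smooth : ContDiffAt ℝ 2 (reparamMixture f α ν) 0 := contDiffAt_reparamMixture_zero hf
  have ne_zero : reparamMixture f α ν 0 ≠ 0 := reparamMixture_zero.trans_ne hfν.ne'
  have critical : fderiv ℝ (reparamMixture f α ν) 0 = 0 :=
    fderiv_reparamMixture_zero (hf.of_le one_le_two)
  refine ⟨smooth.log ne_zero, ?_, ?_⟩
  · rw [fderiv.log (smooth.differentiableAt two_ne_zero) ne_zero, critical, smul_zero]
  · rw [iteratedFDeriv_two_log_of_fderiv_eq_zero smooth ne_zero critical, reparamMixture_zero,
      iteratedFDeriv_two_reparamMixture_zero hf, smul_smul, inv_mul_eq_div]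

end ReparamMixture

/-- Equations (eq:g_nabla) and (eq:s2): for the reparameterized two-component mixture
`g(λ) = α·f(ν + (1−α)λ) + (1−α)·f(ν − αλ)` with `f` positive and `C²` and `α ∈ (0,1)`,
the map `λ ↦ log g(λ)` is twice differentiable at `0`, its first derivative at `0`
vanishes, and its second iterated derivative at `0` is `(α(1−α)/f(ν))·D²f(ν)`. -/
theorem stmt_2 (d : ℕ) (f : (Fin d → ℝ) → ℝ) (hf : ContDiff ℝ 2 f)
    (hfpos : ∀ θ : Fin d → ℝ, 0 < f θ) (α : ℝ) (hα : α ∈ Set.Ioo (0 : ℝ) 1)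
    (ν : Fin d → ℝ) :
    ContDiffAt ℝ 2
        (fun lam : Fin d → ℝ =>
          Real.log (α * f (ν + (1 - α) • lam) + (1 - α) * f (ν - α • lam))) 0 ∧
    fderiv ℝ
        (fun lam : Fin d → ℝ =>
          Real.log (α * f (ν + (1 - α) • lam) + (1 - α) * f (ν - α • lam))) 0 = 0 ∧
    iteratedFDeriv ℝ 2
        (fun lam : Fin d → ℝ =>
          Real.log (α * f (ν + (1 - α) • lam) + (1 - α) * f (ν - α • lam))) 0
      = (α * (1 - α) / f ν) • iteratedFDeriv ℝ 2 f ν :=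
  stmt_2_general hf.contDiffAt (hfpos ν)
end

section
/- Let T ≥ 2 be a natural number. Suppose real constants a_μ, a_σ, a_{μμ}, a_{μσ}, a_{σσ} satisfy, for every y = (y₁, …, y_T) ∈ ℝ^T, the identity a_μ·Σ_{t=1}^T H₁(y_t) + (a_σ + a_{μμ})·Σ_{t=1}^T H₂(y_t) + (a_{μμ}/2)·Σ_{t=1}^T Σ_{s≠t} H₁(y_t)H₁(y_s) + a_{μσ}·Σ_{t=1}^T H₃(y_t) + a_{μσ}·Σ_{t=1}^T Σ_{s≠t} H₁(y_t)H₂(y_s) + 3a_{σσ}·Σ_{t=1}^T H₄(y_t) + (a_{σσ}/2)·Σ_{t=1}^T Σ_{s≠t} H₂(y_t)H₂(y_s) = 0. Then a_μ = a_σ = a_{μμ} = a_{μσ} = a_{σσ} = 0. (This is the no-multicollinearity claim in the proof of Proposition 3(c): for panel length T ≥ 2 the score vector of the panel normal mixture has no linear dependence, so the Fisher information matrix 𝓘 is non-singular; for T = 1 the conclusion fails because the functions corresponding to a_σ and a_{μμ} are collinear.) -/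
/-- The `k`-th probabilists' Hermite polynomial as a real function. -/
noncomputable def hermiteFun (k : ℕ) (x : ℝ) : ℝ :=
  Polynomial.aeval x (Polynomial.hermite k)

/-!
Moving two coordinates of a sum of one-site and two-site terms independently and taking the mixed
difference leaves only the symmetrised two-site kernel, centred in each variable. If the kernel is a
bilinear expression in functions that are linearly independent modulo constants, its symmetrised
coefficients therefore vanish; the two-site part then drops out of first differences, and the
one-site coefficients vanish too. The Hermite functions of positive degree are independent modulo
the constant `H₀ = 1` because their degrees are distinct.
-/

open Finset Function
open scoped Matrix

section TwoBodySum

/-- The symmetric statistic `∑ₜ f(yₜ) + ∑_{s ≠ t} g(yₜ, yₛ)` of a panel `y`, with one-site term `f`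
and two-site term `g`. The second sum runs over ordered pairs, and `g` is not assumed symmetric. -/
def twoBodySum {ι X M : Type*} [Fintype ι] [DecidableEq ι] [AddCommMonoid M]
    (f : X → M) (g : X → X → M) (y : ι → X) : M :=
  ∑ t, f (y t) + ∑ t, ∑ s ∈ univ.erase t, g (y t) (y s)

variable {ι X M : Type*} [Fintype ι] [DecidableEq ι]

theorem twoBodySum_update [AddCommMonoid M] (f : X → M) (g : X → X → M) (y : ι → X) (i : ι)
    (a : X) :
    twoBodySum f g (update y i a) =
      f a + ∑ s ∈ univ.erase i, (g a (y s) + g (y s) a) +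
        ∑ t ∈ univ.erase i, (f (y t) + ∑ s ∈ (univ.erase t).erase i, g (y t) (y s)) := by
  have sum_off (φ : X → M) (s : Finset ι) :
      ∑ t ∈ s.erase i, φ (update y i a t) = ∑ t ∈ s.erase i, φ (y t) :=
    sum_congr rfl fun t ht ↦ by rw [update_of_ne (ne_of_mem_erase ht)]
  have row (t : ι) (ht : t ∈ univ.erase i) :
      ∑ s ∈ univ.erase t, g (update y i a t) (update y i a s) =
        g (y t) a + ∑ s ∈ (univ.erase t).erase i, g (y t) (y s) := by
    have hti : t ≠ i := ne_of_mem_erase ht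
    rw [update_of_ne hti, ← add_sum_erase _ _ (mem_erase.2 ⟨hti.symm, mem_univ i⟩), update_self,
      sum_off]
  rw [twoBodySum, ← add_sum_erase _ _ (mem_univ i), sum_off,
    ← add_sum_erase univ (fun t ↦ ∑ s ∈ univ.erase t, g (update y i a t) (update y i a s))
      (mem_univ i), sum_congr rfl row, update_self, sum_off]
  simp only [sum_add_distrib]
  abel

variable [AddCommGroup M] (f : X → M) (g : X → X → M) (y : ι → X)

theorem twoBodySum_update_sub_update (i : ι) (a a' : X) :
    twoBodySum f g (update y i a) - twoBodySum f g (update y i a') =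
      f a - f a' + ∑ s ∈ univ.erase i, (g a (y s) + g (y s) a - (g a' (y s) + g (y s) a')) := by
  rw [twoBodySum_update, twoBodySum_update, sum_sub_distrib]
  abel

theorem twoBodySum_mixed_difference {i j : ι} (hij : i ≠ j) (a a' b b' : X) :
    twoBodySum f g (update (update y j b) i a) - twoBodySum f g (update (update y j b) i a') -
        (twoBodySum f g (update (update y j b') i a) -
          twoBodySum f g (update (update y j b') i a')) =
      (g a b + g b a - (g a' b + g b a')) - (g a b' + g b' a - (g a' b' + g b' a')) := by
  have sum_update_erase (φ : X → M) (b : X) :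
      ∑ s ∈ univ.erase i, φ (update y j b s) = φ b + ∑ s ∈ (univ.erase i).erase j, φ (y s) := by
    rw [← add_sum_erase _ _ (mem_erase.2 ⟨hij.symm, mem_univ j⟩), update_self]
    exact congrArg _ (sum_congr rfl fun s hs ↦ by rw [update_of_ne (ne_of_mem_erase hs)])
  rw [twoBodySum_update_sub_update, twoBodySum_update_sub_update,
    sum_update_erase fun x ↦ g a x + g x a - (g a' x + g x a'),
    sum_update_erase fun x ↦ g a x + g x a - (g a' x + g x a')]
  abel

end TwoBodySum

section LinearIndependence

theorem linearIndependent_sub_smul {κ R V : Type*} [Ring R] [AddCommGroup V] [Module R V]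
    {e : V} {v : κ → V} (hv : LinearIndependent R fun o : Option κ ↦ o.elim e v) (r : κ → R) :
    LinearIndependent R fun k ↦ v k - r k • e := by
  rw [linearIndependent_iff'] at hv ⊢
  intro s c hc k hk
  refine hv s.insertNone (fun o ↦ o.elim (-∑ k ∈ s, c k * r k) c) ?_ (some k)
    (some_mem_insertNone.2 hk)
  simp only [smul_sub, smul_smul, sum_sub_distrib, ← sum_smul] at hc
  simpa only [sum_insertNone, Option.elim_none, Option.elim_some, neg_smul, neg_add_eq_sub] using hc

variable {κ X R : Type*} [Fintype κ] [CommRing R] {g : κ → X → R}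

theorem bilinear_coeff_eq_zero {κ' Y : Type*} [Fintype κ'] {g' : κ' → Y → R}
    (hg : LinearIndependent R g) (hg' : LinearIndependent R g') {d : Matrix κ κ' R}
    (h : ∀ a b, ∑ k, ∑ l, d k l * (g k a * g' l b) = 0) : d = 0 := by
  rw [Fintype.linearIndependent_iff] at hg hg'
  have hrow (b : Y) (k : κ) : ∑ l, d k l * g' l b = 0 := by
    refine hg (fun k ↦ ∑ l, d k l * g' l b) (funext fun a ↦ ?_) k
    simpa only [Finset.sum_apply, Pi.smul_apply, smul_eq_mul, sum_mul, mul_assoc,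
      mul_comm (g' _ b), Pi.zero_apply] using h a b
  ext k l
  refine hg' (d k) (funext fun b ↦ ?_) l
  simpa only [Finset.sum_apply, Pi.smul_apply, smul_eq_mul, Pi.zero_apply] using hrow b k

theorem coeff_eq_zero_of_twoBodySum_eq_zero {ι : Type*} [Fintype ι] [DecidableEq ι] [Nontrivial ι]
    [Nonempty X] (hg : LinearIndependent R fun o : Option κ ↦ o.elim 1 g)
    {c : κ → R} {d : Matrix κ κ R}
    (h : ∀ y : ι → X, twoBodySum (fun a ↦ ∑ k, c k * g k a)
      (fun a b ↦ ∑ k, ∑ l, d k l * (g k a * g l b)) y = 0) :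
    c = 0 ∧ d + dᵀ = 0 := by
  obtain ⟨i, j, hij⟩ := exists_pair_ne ι
  obtain ⟨x₀⟩ := ‹Nonempty X›
  have hg₀ : LinearIndependent R fun k x ↦ g k x - g k x₀ := by
    simpa only [Pi.sub_def, Pi.smul_def, Pi.one_apply, smul_eq_mul, mul_one]
      using linearIndependent_sub_smul hg fun k ↦ g k x₀
  have symmetrize (a b : X) :
      ∑ k, ∑ l, d k l * (g k a * g l b) + ∑ k, ∑ l, d k l * (g k b * g l a) =
        ∑ k, ∑ l, (d + dᵀ) k l * (g k a * g l b) := by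
    rw [sum_comm (f := fun k l ↦ d k l * (g k b * g l a))]
    simp only [← sum_add_distrib, Matrix.add_apply, Matrix.transpose_apply]
    exact sum_congr rfl fun k _ ↦ sum_congr rfl fun l _ ↦ by ring
  have hd : d + dᵀ = 0 := by
    refine bilinear_coeff_eq_zero hg₀ hg₀ fun a b ↦ ?_
    have hmixed := twoBodySum_mixed_difference (fun a ↦ ∑ k, c k * g k a)
      (fun a b ↦ ∑ k, ∑ l, d k l * (g k a * g l b)) (fun _ ↦ x₀) hij a x₀ b x₀
    simp only [h, sub_zero, symmetrize] at hmixed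
    simp only [← sum_sub_distrib] at hmixed
    refine Eq.trans ?_ hmixed.symm
    exact sum_congr rfl fun k _ ↦ sum_congr rfl fun l _ ↦ by ring
  have hc : c = 0 := by
    refine funext (Fintype.linearIndependent_iff.1 hg₀ c (funext fun a ↦ ?_))
    have hfirst := twoBodySum_update_sub_update (fun a ↦ ∑ k, c k * g k a)
      (fun a b ↦ ∑ k, ∑ l, d k l * (g k a * g l b)) (fun _ ↦ x₀) i a x₀
    simp only [h, symmetrize, hd, Matrix.zero_apply, zero_mul, sum_const_zero, sub_zero,
      add_zero] at hfirst
    simpa only [Finset.sum_apply, Pi.smul_apply, smul_eq_mul, mul_sub, sum_sub_distrib,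
      Pi.zero_apply] using hfirst.symm
  exact ⟨hc, hd⟩

end LinearIndependence

section Hermite

theorem linearIndependent_polynomialSequence_eval {R : Type*} [CommRing R] [IsDomain R] [Infinite R]
    (S : Polynomial.Sequence R) : LinearIndependent R fun n x ↦ (S n).eval x := by
  have heval : LinearMap.ker (LinearMap.pi (Polynomial.leval (R := R))) = ⊥ :=
    LinearMap.ker_eq_bot_of_injective fun _ _ hpq ↦ Polynomial.funext (congrFun hpq)
  exact S.linearIndependent.map' _ heval

theorem linearIndependent_hermiteFun : LinearIndependent ℝ hermiteFun := by
  let S : Polynomial.Sequence ℝ :=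
    { elems' := fun n ↦ (Polynomial.hermite n).map (Int.castRingHom ℝ)
      degree_eq' := fun n ↦ by
        rw [(Polynomial.hermite_monic n).degree_map, Polynomial.degree_hermite] }
  have hS : hermiteFun = fun n x ↦ (S n).eval x :=
    funext₂ fun _ _ ↦ (Polynomial.eval_map_algebraMap _ _).symm
  exact hS ▸ linearIndependent_polynomialSequence_eval S

theorem linearIndependent_one_hermiteFun_succ (n : ℕ) :
    LinearIndependent ℝ fun o : Option (Fin n) ↦ o.elim 1 fun k ↦ hermiteFun (k + 1) := by
  have hinj : Injective fun o : Option (Fin n) ↦ o.elim 0 fun k ↦ (k : ℕ) + 1 := by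
    rintro (_ | k) (_ | l) hkl <;> simp_all [Fin.ext_iff]
  convert linearIndependent_hermiteFun.comp _ hinj using 2 with o
  cases o
  · ext x
    simp [hermiteFun]
  · rfl

end Hermite

/-- No multicollinearity of the panel normal mixture score (proof of Proposition 3(c)):
for panel length `T ≥ 2`, if the displayed linear combination of Hermite-polynomial
score components vanishes identically on `ℝ^T`, then all coefficients vanish. -/
theorem stmt_5 (T : ℕ) (hT : 2 ≤ T)
    (aμ aσ aμμ aμσ aσσ : ℝ)
    (h : ∀ y : Fin T → ℝ,
      aμ * ∑ t : Fin T, hermiteFun 1 (y t)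
      + (aσ + aμμ) * ∑ t : Fin T, hermiteFun 2 (y t)
      + (aμμ / 2) * ∑ t : Fin T, ∑ s ∈ Finset.univ.erase t,
          hermiteFun 1 (y t) * hermiteFun 1 (y s)
      + aμσ * ∑ t : Fin T, hermiteFun 3 (y t)
      + aμσ * ∑ t : Fin T, ∑ s ∈ Finset.univ.erase t,
          hermiteFun 1 (y t) * hermiteFun 2 (y s)
      + 3 * aσσ * ∑ t : Fin T, hermiteFun 4 (y t)
      + (aσσ / 2) * ∑ t : Fin T, ∑ s ∈ Finset.univ.erase t,
          hermiteFun 2 (y t) * hermiteFun 2 (y s) = 0) :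
    aμ = 0 ∧ aσ = 0 ∧ aμμ = 0 ∧ aμσ = 0 ∧ aσσ = 0 := by
  have : Nontrivial (Fin T) := Fin.nontrivial_iff_two_le.2 hT
  obtain ⟨hc, hd⟩ := coeff_eq_zero_of_twoBodySum_eq_zero (ι := Fin T)
    (linearIndependent_one_hermiteFun_succ 4) (c := ![aμ, aσ + aμμ, aμσ, 3 * aσσ])
    (d := !![aμμ / 2, aμσ, 0, 0; 0, aσσ / 2, 0, 0; 0, 0, 0, 0; 0, 0, 0, 0]) fun y ↦ by
      refine Eq.trans ?_ (h y)
      simp only [twoBodySum, Fin.sum_univ_four, Matrix.of_apply, Matrix.cons_val, Fin.isValue,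
        Fin.coe_ofNat_eq_mod, Nat.reduceMod, Nat.reduceAdd, zero_mul, add_zero, sum_add_distrib,
        mul_sum]
      ring
  have hμμ : aμμ / 2 + aμμ / 2 = 0 := congrFun₂ hd 0 0
  have hμσ : aμσ + 0 = 0 := congrFun₂ hd 0 1
  have hσσ : aσσ / 2 + aσσ / 2 = 0 := congrFun₂ hd 1 1
  have hμ : aμ = 0 := congrFun hc 0
  have hσ : aσ + aμμ = 0 := congrFun hc 1
  refine ⟨hμ, ?_, ?_, ?_, ?_⟩ <;> linarith
end

section
/- Let T ≥ 2 be a natural number, ε > 0, and let F : ℝ → ℝ be the cumulative distribution function of the chi-square distribution with T − 1 degrees of freedom, F(u) = (chi-square(T−1))((−∞, u]). Then F((εx)^{2/T}) / x → +∞ as x → 0 from the right. -/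
open MeasureTheory ProbabilityTheory Filter

/-- The chi-square distribution with `k` degrees of freedom (`k` a real parameter):
the Gamma distribution with shape `k/2` and rate `1/2`. -/
noncomputable def chiSqMeasure (k : ℝ) : Measure ℝ :=
  gammaMeasure (k / 2) (1 / 2)

/-- The cumulative distribution function of the chi-square distribution with `k`
degrees of freedom. -/
noncomputable def chiSqCDF (k : ℝ) (u : ℝ) : ℝ :=
  (chiSqMeasure k (Set.Iic u)).toReal

/-! Near `0` the factor `exp (-r s)` in the Gamma density is harmless, so the Gamma distribution
function satisfies `F u ≥ c u ^ a exp (-r u)`, where `a` is the shape. Hence `F u / u ^ q → ∞` as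
`u → 0⁺` for every `q > a`. With `u = (ε x) ^ p` one has `x = u ^ (1 / p) / ε`, so
`F ((ε x) ^ p) / x = ε F u / u ^ q` with `q = 1 / p`; for the chi-square distribution
`a = (T - 1) / 2` and `q = T / 2`. -/

section GammaDistribution

variable {a r : ℝ}

lemma integrable_gammaPDFReal (ha : 0 < a) (hr : 0 < r) : Integrable (gammaPDFReal a r) := by
  refine (lintegral_ofReal_ne_top_iff_integrable (by fun_prop)
    (ae_of_all _ (gammaPDFReal_nonneg ha hr))).mp ?_
  exact (lintegral_gammaPDF_eq_one ha hr).trans_ne ENNReal.one_ne_top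

lemma exp_mul_rpow_le_gammaPDFReal (ha : 0 < a) (hr : 0 < r) {s u : ℝ} (hs : 0 ≤ s)
    (hsu : s ≤ u) :
    r ^ a / Real.Gamma a * Real.exp (-(r * u)) * s ^ (a - 1) ≤ gammaPDFReal a r s := by
  rw [gammaPDFReal, if_pos hs, mul_right_comm]
  gcongr

lemma setIntegral_Ioc_rpow_sub_one (ha : 0 < a) {u : ℝ} (hu : 0 ≤ u) :
    ∫ s in Set.Ioc 0 u, s ^ (a - 1) = u ^ a / a := by
  rw [← intervalIntegral.integral_of_le hu, integral_rpow (.inl (by linarith)), sub_add_cancel,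
    Real.zero_rpow ha.ne', sub_zero]

lemma exp_mul_rpow_le_gammaMeasure_real_Iic (ha : 0 < a) (hr : 0 < r) {u : ℝ} (hu : 0 ≤ u) :
    r ^ a / Real.Gamma (a + 1) * Real.exp (-(r * u)) * u ^ a ≤
      (gammaMeasure a r).real (Set.Iic u) := by
  have := isProbabilityMeasure_gammaMeasure ha hr
  have hpdf := integrable_gammaPDFReal ha hr
  have hpow : IntegrableOn (fun s : ℝ => s ^ (a - 1)) (Set.Ioc 0 u) :=
    (intervalIntegrable_iff_integrableOn_Ioc_of_le hu).mp
      (intervalIntegral.intervalIntegrable_rpow' (by linarith))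
  calc r ^ a / Real.Gamma (a + 1) * Real.exp (-(r * u)) * u ^ a
      = ∫ s in Set.Ioc 0 u, r ^ a / Real.Gamma a * Real.exp (-(r * u)) * s ^ (a - 1) := by
        rw [integral_const_mul, setIntegral_Ioc_rpow_sub_one ha hu, Real.Gamma_add_one ha.ne']
        field_simp
    _ ≤ ∫ s in Set.Ioc 0 u, gammaPDFReal a r s :=
        setIntegral_mono_on (hpow.const_mul _) hpdf.integrableOn measurableSet_Ioc
          fun s hs => exp_mul_rpow_le_gammaPDFReal ha hr hs.1.le hs.2
    _ ≤ ∫ s in Set.Iic u, gammaPDFReal a r s :=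
        setIntegral_mono_set hpdf.integrableOn (ae_of_all _ (gammaPDFReal_nonneg ha hr))
          Set.Ioc_subset_Iic_self.eventuallyLE
    _ = (gammaMeasure a r).real (Set.Iic u) := by
        rw [← cdf_gammaMeasure_eq_integral ha hr, cdf_eq_real]

lemma tendsto_gammaMeasure_real_Iic_div_rpow_atTop (ha : 0 < a) (hr : 0 < r) {q : ℝ}
    (haq : a < q) :
    Tendsto (fun u : ℝ => (gammaMeasure a r).real (Set.Iic u) / u ^ q)
      (nhdsWithin 0 (Set.Ioi 0)) atTop := by
  have hcoeff : Tendsto (fun u : ℝ => r ^ a / Real.Gamma (a + 1) * Real.exp (-(r * u)))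
      (nhdsWithin 0 (Set.Ioi 0)) (nhds (r ^ a / Real.Gamma (a + 1))) :=
    tendsto_nhdsWithin_of_tendsto_nhds <| Continuous.tendsto' (by fun_prop) _ _ (by simp)
  have hpow : Tendsto (fun u : ℝ => u ^ (a - q)) (nhdsWithin 0 (Set.Ioi 0)) atTop :=
    tendsto_rpow_neg_nhdsGT_zero (sub_neg.mpr haq)
  have hpos : 0 < r ^ a / Real.Gamma (a + 1) := by positivity
  refine tendsto_atTop_mono' _ ?_ (hcoeff.pos_mul_atTop hpos hpow)
  filter_upwards [self_mem_nhdsWithin] with u (hu : 0 < u)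
  rw [Real.rpow_sub hu, ← mul_div_assoc]
  gcongr
  exact exp_mul_rpow_le_gammaMeasure_real_Iic ha hr hu.le

end GammaDistribution

lemma tendsto_mul_rpow_nhdsGT_zero {ε p : ℝ} (hε : 0 < ε) (hp : 0 < p) :
    Tendsto (fun x : ℝ => (ε * x) ^ p) (nhdsWithin 0 (Set.Ioi 0)) (nhdsWithin 0 (Set.Ioi 0)) := by
  refine tendsto_nhdsWithin_iff.mpr ⟨tendsto_nhdsWithin_of_tendsto_nhds ?_, ?_⟩
  · have hcont : Continuous fun x : ℝ => (ε * x) ^ p :=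
      (continuous_const_mul ε).rpow_const fun _ => .inr hp.le
    exact hcont.tendsto' _ _ (by simp [hp.ne'])
  · filter_upwards [self_mem_nhdsWithin] with x (hx : 0 < x)
    exact Real.rpow_pos_of_pos (mul_pos hε hx) p

lemma tendsto_comp_mul_rpow_div_atTop {F : ℝ → ℝ} {ε p : ℝ} (hε : 0 < ε) (hp : 0 < p)
    (hF : Tendsto (fun u => F u / u ^ p⁻¹) (nhdsWithin 0 (Set.Ioi 0)) atTop) :
    Tendsto (fun x => F ((ε * x) ^ p) / x) (nhdsWithin 0 (Set.Ioi 0)) atTop := by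
  refine ((hF.comp (tendsto_mul_rpow_nhdsGT_zero hε hp)).const_mul_atTop hε).congr' ?_
  filter_upwards [self_mem_nhdsWithin] with x (hx : 0 < x)
  rw [Function.comp_apply, Real.rpow_rpow_inv (mul_pos hε hx).le hp.ne', ← mul_div_assoc,
    mul_div_mul_left _ _ hε.ne']

theorem stmt_10_general {a r p ε : ℝ} (ha : 0 < a) (hr : 0 < r) (hp : 0 < p) (hap : a * p < 1)
    (hε : 0 < ε) :
    Tendsto (fun x : ℝ => (gammaMeasure a r).real (Set.Iic ((ε * x) ^ p)) / x)
      (nhdsWithin 0 (Set.Ioi 0)) atTop := by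
  have ha_lt : a < p⁻¹ := by rwa [← one_div, lt_div_iff₀ hp]
  exact tendsto_comp_mul_rpow_div_atTop (F := fun u => (gammaMeasure a r).real (Set.Iic u)) hε hp
    (tendsto_gammaMeasure_real_Iic_div_rpow_atTop ha hr ha_lt)

/-- Key step of Lemma 1 (via L'Hôpital's rule): for `T ≥ 2` and `ε > 0`, the ratio
`F((εx)^{2/T}) / x` tends to `+∞` as `x → 0⁺`, where `F` is the chi-square(T−1) CDF. -/
theorem stmt_10 (T : ℕ) (hT : 2 ≤ T) (ε : ℝ) (hε : 0 < ε) :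
    Tendsto (fun x : ℝ => chiSqCDF ((T : ℝ) - 1) ((ε * x) ^ ((2 : ℝ) / (T : ℝ))) / x)
      (nhdsWithin 0 (Set.Ioi 0)) atTop := by
  have hT' : (2 : ℝ) ≤ T := by exact_mod_cast hT
  have hexponent : ((T : ℝ) - 1) / 2 * (2 / T) < 1 := by
    rw [div_mul_div_cancel₀ two_ne_zero, div_lt_one (by linarith)]
    exact sub_one_lt _
  exact stmt_10_general (by linarith) one_half_pos (by positivity) hexponent hε
end
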